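/- Let d = 2^n, σ > 0, and x, y ∈ ℝ^d with z = ‖x−y‖/σ. Let D_1, D_2, D_3 be independent random sign diagonal matrices, let H be the normalized Walsh–Hadamard matrix, and define the Structured Orthogonal Random Features kernel estimate K_SORF(x,y) = (1/d)·Σ_{i=1}^d cos(w_iᵀ(x−y)/σ), where w_1,…,w_d are the rows of √d·H·D_1·H·D_2·H·D_3. Then |E[K_SORF(x,y)] − e^{-z²/2}| ≤ 6z/√d. -/

import Mathlib

open MeasureTheory ProbabilityTheory Real

/-- The Rademacher distribution on `ℝ`: `±1` each with probability `1/2`. -/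
noncomputable def rademacher : Measure ℝ :=
  (2 : ENNReal)⁻¹ • Measure.dirac 1 + (2 : ENNReal)⁻¹ • Measure.dirac (-1)

/-- The normalized Walsh–Hadamard matrix of size `2^n`: entry `(i,j)` is
`(−1)^{⟨i,j⟩}/√(2^n)` where `⟨i,j⟩` is the inner product of the binary representations of
the (0-indexed) `i` and `j`. -/
noncomputable def hadamardMatrix (n : ℕ) : Matrix (Fin (2 ^ n)) (Fin (2 ^ n)) ℝ :=
  Matrix.of fun i j =>
    (-1 : ℝ) ^ (∑ k : Fin n, ((i : ℕ).testBit k).toNat * ((j : ℕ).testBit k).toNat) /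
      Real.sqrt (2 ^ n)

/-!
Write `v = (x - y) / σ`, `z = ‖v‖`, `d = 2 ^ n` and `u = H D₂ H D₃ v`. The entries of `√d H` are
`±1`, so averaging over `D₁` alone turns the expectation of every summand into `∏ⱼ cos uⱼ`. Since
`H` and the `Dᵢ` are orthogonal, `∑ⱼ uⱼ ^ 2 = z ^ 2` almost surely, and
`(∏ⱼ cos uⱼ - exp (-z ^ 2 / 2)) ^ 2 * z ^ 2 ≤ 2 * ∑ⱼ uⱼ ^ 4`: if the fourth powers dominate this is
trivial, and otherwise it combines the Taylor bound `(∑ⱼ uⱼ ^ 4) / 8` on the difference with the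
decay of both terms in `z`. Conditionally on `D₃`, each `uⱼ` is a Rademacher sum, sub-Gaussian with
parameter `z ^ 2 / d`, so the fourth moments add up to at most `12 * z ^ 4 / d`. By Jensen's
inequality the squared bias is at most `24 * z ^ 2 / d`.
-/

section Analysis

lemma cos_le_one_sub_sq_div_two_add (x : ℝ) : cos x ≤ 1 - x ^ 2 / 2 + x ^ 4 / 24 := by
  wlog hx : 0 ≤ x generalizing x
  · simpa [Even.neg_pow (show Even 4 by decide)] using this (-x) (by linarith)
  have cos_eq : cos x = 1 - 2 * sin (x / 2) ^ 2 := by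
    rw [← cos_two_mul_eq_one_sub, mul_div_cancel₀ x two_ne_zero]
  by_cases hx12 : x ^ 2 ≤ 12
  · have sin_ge : x / 2 - (x / 2) ^ 3 / 6 ≤ sin (x / 2) := sin_ge_sub_cube (by positivity)
    have := pow_le_pow_left₀ (by nlinarith) sin_ge 2
    nlinarith [sq_nonneg (x ^ 3)]
  · nlinarith [cos_le_one x]

lemma exp_neg_le_one_sub_add_sq_div_two {s : ℝ} (hs : 0 ≤ s) : exp (-s) ≤ 1 - s + s ^ 2 / 2 := by
  have : 0 ≤ 1 - s + s ^ 2 / 2 := by nlinarith [sq_nonneg (s - 1)]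
  rw [exp_neg, inv_le_iff_one_le_mul₀ (exp_pos s)]
  calc 1 ≤ (1 - s + s ^ 2 / 2) * (1 + s + s ^ 2 / 2) := by nlinarith [sq_nonneg (s ^ 2)]
    _ ≤ (1 - s + s ^ 2 / 2) * exp s := by gcongr; exact quadratic_le_exp_of_nonneg hs

lemma abs_cos_sub_exp_neg_sq_div_two_le (t : ℝ) : |cos t - exp (-(t ^ 2 / 2))| ≤ t ^ 4 / 8 := by
  have cos_ge := one_sub_sq_div_two_le_cos (x := t)
  have cos_le := cos_le_one_sub_sq_div_two_add t
  have exp_ge := add_one_le_exp (-(t ^ 2 / 2))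
  have exp_le := exp_neg_le_one_sub_add_sq_div_two (s := t ^ 2 / 2) (by positivity)
  have : 0 ≤ t ^ 4 := by positivity
  rw [abs_le]
  constructor <;> linarith

lemma abs_cos_le_exp (t : ℝ) : |cos t| ≤ exp (-(t ^ 2 / 2 - t ^ 4 / 6)) := by
  refine abs_le_of_sq_le_sq ?_ (exp_pos _).le
  calc cos t ^ 2 = 1 / 2 + cos (2 * t) / 2 := cos_sq t
    _ ≤ 2 * (-(t ^ 2 / 2 - t ^ 4 / 6)) + 1 := by
      linarith [cos_le_one_sub_sq_div_two_add (2 * t)]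
    _ ≤ exp (2 * (-(t ^ 2 / 2 - t ^ 4 / 6))) := add_one_le_exp _
    _ = exp (-(t ^ 2 / 2 - t ^ 4 / 6)) ^ 2 := by rw [← exp_nat_mul, Nat.cast_ofNat]

variable {ι : Type*}

lemma abs_prod_le_one {s : Finset ι} {a : ι → ℝ} (ha : ∀ i ∈ s, |a i| ≤ 1) :
    |∏ i ∈ s, a i| ≤ 1 := by
  rw [Finset.abs_prod]
  exact Finset.prod_le_one (fun _ _ => abs_nonneg _) ha

lemma abs_prod_sub_prod_le_sum_abs_sub {s : Finset ι} {a b : ι → ℝ} (ha : ∀ i ∈ s, |a i| ≤ 1)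
    (hb : ∀ i ∈ s, |b i| ≤ 1) : |∏ i ∈ s, a i - ∏ i ∈ s, b i| ≤ ∑ i ∈ s, |a i - b i| := by
  classical
  induction s using Finset.induction_on with
  | empty => simp
  | insert i s hi ih =>
    rw [Finset.forall_mem_insert] at ha hb
    rw [Finset.prod_insert hi, Finset.prod_insert hi, Finset.sum_insert hi]
    calc |a i * ∏ j ∈ s, a j - b i * ∏ j ∈ s, b j|
        = |(a i - b i) * ∏ j ∈ s, a j + b i * (∏ j ∈ s, a j - ∏ j ∈ s, b j)| := by ring_nf
      _ ≤ |a i - b i| * |∏ j ∈ s, a j| + |b i| * |∏ j ∈ s, a j - ∏ j ∈ s, b j| := by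
        rw [← abs_mul, ← abs_mul]
        exact abs_add_le _ _
      _ ≤ |a i - b i| + ∑ j ∈ s, |a j - b j| :=
        add_le_add (mul_le_of_le_one_right (abs_nonneg _) (abs_prod_le_one ha.2))
          ((mul_le_of_le_one_left (abs_nonneg _) hb.1).trans (ih ha.2 hb.2))

variable [Fintype ι] (t : ι → ℝ)

lemma abs_prod_cos_le_one : |∏ i, cos (t i)| ≤ 1 :=
  abs_prod_le_one fun _ _ => abs_cos_le_one _

lemma abs_prod_cos_sub_exp_le :
    |∏ i, cos (t i) - exp (-(∑ i, t i ^ 2) / 2)| ≤ (∑ i, t i ^ 4) / 8 := by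
  have exp_eq_prod : exp (-(∑ i, t i ^ 2) / 2) = ∏ i, exp (-(t i ^ 2 / 2)) := by
    rw [← exp_sum, Finset.sum_neg_distrib, ← Finset.sum_div, neg_div]
  rw [exp_eq_prod, Finset.sum_div]
  have exp_le_one (i : ι) : |exp (-(t i ^ 2 / 2))| ≤ 1 := by
    rw [abs_exp, exp_le_one_iff]
    linarith [sq_nonneg (t i)]
  exact (abs_prod_sub_prod_le_sum_abs_sub (fun _ _ => abs_cos_le_one _) fun i _ => exp_le_one i)
    |>.trans (Finset.sum_le_sum fun i _ => abs_cos_sub_exp_neg_sq_div_two_le (t i))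

lemma abs_prod_cos_le_exp :
    |∏ i, cos (t i)| ≤ exp (-((∑ i, t i ^ 2) / 2 - (∑ i, t i ^ 4) / 6)) := by
  rw [Finset.abs_prod, Finset.sum_div, Finset.sum_div, ← Finset.sum_sub_distrib,
    ← Finset.sum_neg_distrib, exp_sum]
  exact Finset.prod_le_prod (fun _ _ => abs_nonneg _) fun i _ => abs_cos_le_exp _

lemma sq_prod_cos_sub_exp_mul_le :
    (∏ i, cos (t i) - exp (-(∑ i, t i ^ 2) / 2)) ^ 2 * ∑ i, t i ^ 2 ≤ 2 * ∑ i, t i ^ 4 := by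
  have abs_le_pow_four := abs_prod_cos_sub_exp_le t
  have prod_le_one := abs_prod_cos_le_one t
  have prod_le_exp := abs_prod_cos_le_exp t
  have hZ : 0 ≤ ∑ i, t i ^ 2 := by positivity
  have hS : 0 ≤ ∑ i, t i ^ 4 := by positivity
  set P := ∏ i, cos (t i)
  set Z := ∑ i, t i ^ 2
  set S := ∑ i, t i ^ 4
  have abs_le_add : |P - exp (-Z / 2)| ≤ |P| + exp (-Z / 2) := by
    simpa only [abs_exp] using abs_sub P (exp (-Z / 2))
  rw [← sq_abs]
  obtain h | h := le_total (2 * Z) S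
  · have abs_le_two : |P - exp (-Z / 2)| ≤ 2 := by
      linarith [exp_le_one_iff.2 (show -Z / 2 ≤ 0 by linarith)]
    calc |P - exp (-Z / 2)| ^ 2 * Z ≤ 2 ^ 2 * Z := by gcongr
      _ ≤ 2 * S := by linarith
  · have abs_le_exp : |P - exp (-Z / 2)| ≤ 2 * exp (-(Z / 6)) := by
      linarith [exp_le_exp.2 (show -(Z / 2 - S / 6) ≤ -(Z / 6) by linarith),
        exp_le_exp.2 (show -Z / 2 ≤ -(Z / 6) by linarith)]
    have mul_exp_le_one : Z / 6 * exp (-(Z / 6)) ≤ 1 :=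
      (mul_exp_neg_le_exp_neg_one _).trans (exp_le_one_iff.2 (by norm_num))
    calc |P - exp (-Z / 2)| ^ 2 * Z = |P - exp (-Z / 2)| * |P - exp (-Z / 2)| * Z := by rw [sq]
      _ ≤ S / 8 * (2 * exp (-(Z / 6))) * Z := by gcongr
      _ = 3 / 2 * S * (Z / 6 * exp (-(Z / 6))) := by ring
      _ ≤ 3 / 2 * S * 1 := by gcongr
      _ ≤ 2 * S := by linarith

end Analysis

section SubGaussian

variable {Ω : Type*} {mΩ : MeasurableSpace Ω} {μ : Measure Ω} {X : Ω → ℝ} {c : NNReal}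

lemma pow_four_div_le_cosh (x : ℝ) : x ^ 4 / 24 ≤ cosh x := by
  have := le_hasSum (hasSum_cosh x) 2 fun i _ => by rw [pow_mul]; positivity
  simpa [Nat.factorial] using this

lemma integrable_pow_four_of_hasSubgaussianMGF (hX : HasSubgaussianMGF X c μ) :
    Integrable (fun ω => X ω ^ 4) μ := by
  simpa [Even.pow_abs (show Even 4 by decide)] using
    (hX.memLp 4).integrable_norm_pow (p := 4) four_ne_zero

lemma mul_integral_pow_four_le_exp (hX : HasSubgaussianMGF X c μ) (s : ℝ) :
    s ^ 4 / 24 * ∫ ω, X ω ^ 4 ∂μ ≤ exp (c * s ^ 2 / 2) := by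
  calc s ^ 4 / 24 * ∫ ω, X ω ^ 4 ∂μ = ∫ ω, s ^ 4 / 24 * X ω ^ 4 ∂μ := (integral_const_mul _ _).symm
    _ ≤ ∫ ω, (exp (s * X ω) + exp (-s * X ω)) / 2 ∂μ := by
      refine integral_mono ((integrable_pow_four_of_hasSubgaussianMGF hX).const_mul _)
        (((hX.integrable_exp_mul s).add (hX.integrable_exp_mul (-s))).div_const 2) fun ω => ?_
      calc s ^ 4 / 24 * X ω ^ 4 = (s * X ω) ^ 4 / 24 := by ring
        _ ≤ cosh (s * X ω) := pow_four_div_le_cosh _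
        _ = (exp (s * X ω) + exp (-s * X ω)) / 2 := by rw [cosh_eq, neg_mul]
    _ = (mgf X μ s + mgf X μ (-s)) / 2 := by
      rw [integral_div, integral_add (hX.integrable_exp_mul s) (hX.integrable_exp_mul (-s))]
      rfl
    _ ≤ exp (c * s ^ 2 / 2) := by linarith [hX.mgf_le s, neg_sq s ▸ hX.mgf_le (-s)]

lemma integral_pow_four_le_of_hasSubgaussianMGF (hX : HasSubgaussianMGF X c μ) :
    ∫ ω, X ω ^ 4 ∂μ ≤ 12 * (c : ℝ) ^ 2 := by
  obtain rfl | hc := eq_or_ne c 0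
  · have : ∫ ω, X ω ^ 4 ∂μ = 0 := integral_eq_zero_of_ae <| by
      filter_upwards [hX.ae_eq_zero_of_hasSubgaussianMGF_zero] with ω hω
      simp [hω]
    simp [this]
  have hc' : (0 : ℝ) < c := by positivity
  have exp_two_le : exp 2 ≤ 8 := by
    rw [← Nat.cast_ofNat, ← exp_one_pow]
    nlinarith [exp_one_lt_d9, exp_pos 1]
  -- `s ^ 2 = 4 / c` minimizes `s ^ (-4) * exp (c * s ^ 2 / 2)`.
  have s_sq : (2 / √c) ^ 2 = 4 / (c : ℝ) := by rw [div_pow, sq_sqrt hc'.le]; norm_num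
  have moment_le := mul_integral_pow_four_le_exp hX (2 / √c)
  rw [show (2 / √(c : ℝ)) ^ 4 = ((2 / √(c : ℝ)) ^ 2) ^ 2 by ring, s_sq,
    mul_div_cancel₀ _ hc'.ne'] at moment_le
  norm_num at moment_le
  have := moment_le.trans exp_two_le
  field_simp at this
  linarith

end SubGaussian

section Rademacher

instance : IsProbabilityMeasure rademacher :=
  ⟨by simp [rademacher, ENNReal.inv_two_add_inv_two]⟩

lemma ae_rademacher_iff {p : ℝ → Prop} : (∀ᵐ x ∂rademacher, p x) ↔ p 1 ∧ p (-1) := by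
  rw [rademacher, ae_add_measure_iff, Measure.ae_ennreal_smul_measure_iff (by simp),
    Measure.ae_ennreal_smul_measure_iff (by simp)]
  simp [ae_dirac_eq]

lemma integral_rademacher {E : Type*} [NormedAddCommGroup E] [NormedSpace ℝ E] [CompleteSpace E]
    (f : ℝ → E) : ∫ x, f x ∂rademacher = (2 : ℝ)⁻¹ • (f 1 + f (-1)) := by
  have integrable_half_dirac (a : ℝ) : Integrable f ((2 : ENNReal)⁻¹ • Measure.dirac a) :=
    (integrable_dirac (by simp)).smul_measure (by simp)
  rw [rademacher, integral_add_measure (integrable_half_dirac _) (integrable_half_dirac _)]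
  simp

lemma hasSubgaussianMGF_rademacher : HasSubgaussianMGF id 1 rademacher := by
  have bounded : ∀ᵐ x ∂rademacher, id x ∈ Set.Icc (-1 : ℝ) 1 := ae_rademacher_iff.2 (by simp)
  have centered : ∫ x, id x ∂rademacher = 0 := by simp [integral_rademacher]
  convert hasSubgaussianMGF_of_mem_Icc_of_integral_eq_zero aemeasurable_id bounded centered
  norm_num

/-- The law of a vector of independent signs indexed by `ι`, i.e. of the diagonal of a random sign
matrix. -/
noncomputable abbrev rademacherPi (ι : Type*) [Fintype ι] : Measure (ι → ℝ) :=
  Measure.pi fun _ => rademacher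

variable {ι : Type*} [Fintype ι]

lemma ae_rademacherPi_sq_eq_one : ∀ᵐ ε ∂rademacherPi ι, ∀ i, ε i ^ 2 = 1 := by
  have sq_eq_one : ∀ᵐ x ∂rademacher, x ^ 2 = 1 := ae_rademacher_iff.2 (by simp)
  exact ae_all_iff.2 fun i =>
    (Measure.tendsto_eval_ae_ae (μ := fun _ : ι => rademacher) (i := i)).eventually sq_eq_one

lemma hasSubgaussianMGF_sum_mul_rademacherPi (a : ι → ℝ) :
    HasSubgaussianMGF (fun ε => ∑ j, a j * ε j) (∑ j, ‖a j‖₊ ^ 2) (rademacherPi ι) := by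
  have indep : iIndepFun (fun j (ε : ι → ℝ) => a j * ε j) (rademacherPi ι) :=
    iIndepFun_pi (X := fun j x => a j * x) fun _ => by fun_prop
  refine HasSubgaussianMGF.sum_of_iIndepFun indep fun j _ => ?_
  have coord : HasSubgaussianMGF (fun ε : ι → ℝ => ε j) 1 (rademacherPi ι) := by
    refine .of_map (X := id) (Y := fun ε : ι → ℝ => ε j) (measurable_pi_apply j).aemeasurable ?_
    rw [(measurePreserving_eval (fun _ => rademacher) j).map_eq]
    exact hasSubgaussianMGF_rademacher
  have param_eq : ‖a j‖₊ ^ 2 = .mk (a j ^ 2) (sq_nonneg _) * 1 := by ext; simp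
  rw [param_eq]
  exact coord.const_mul (a j)

lemma integral_sum_mul_pow_four_rademacherPi_le (a : ι → ℝ) :
    ∫ ε, (∑ j, a j * ε j) ^ 4 ∂rademacherPi ι ≤ 12 * (∑ j, a j ^ 2) ^ 2 := by
  simpa using integral_pow_four_le_of_hasSubgaussianMGF (hasSubgaussianMGF_sum_mul_rademacherPi a)

lemma integral_cos_sum_mul_rademacherPi (a : ι → ℝ) :
    ∫ ε, cos (∑ j, a j * ε j) ∂rademacherPi ι = ∏ j, cos (a j) := by
  have integral_exp : ∫ ε : ι → ℝ, ∏ j, Complex.exp ((a j * ε j : ℝ) * Complex.I) ∂rademacherPi ι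
      = ((∏ j, cos (a j) : ℝ) : ℂ) := by
    rw [integral_fintype_prod_eq_prod
      (f := fun j (x : ℝ) => Complex.exp ((a j * x : ℝ) * Complex.I)), Complex.ofReal_prod]
    refine Finset.prod_congr rfl fun j _ => ?_
    rw [integral_rademacher, Complex.ofReal_cos, Complex.cos]
    simp [div_eq_inv_mul, mul_add]
  have integrable_exp : Integrable
      (fun ε : ι → ℝ => ∏ j, Complex.exp ((a j * ε j : ℝ) * Complex.I)) (rademacherPi ι) :=
    .of_bound (Continuous.aestronglyMeasurable (by fun_prop)) 1 <| ae_of_all _ fun ε => by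
      simp only [norm_prod, Complex.norm_exp_ofReal_mul_I, Finset.prod_const_one, le_refl]
  calc ∫ ε, cos (∑ j, a j * ε j) ∂rademacherPi ι
      = ∫ ε, (∏ j, Complex.exp ((a j * ε j : ℝ) * Complex.I)).re ∂rademacherPi ι := by
        simp_rw [← Complex.exp_sum, ← Finset.sum_mul, ← Complex.ofReal_sum,
          Complex.exp_ofReal_mul_I_re]
    _ = (∫ ε, ∏ j, Complex.exp ((a j * ε j : ℝ) * Complex.I) ∂rademacherPi ι).re :=
        integral_re integrable_exp
    _ = ∏ j, cos (a j) := by rw [integral_exp, Complex.ofReal_re]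

end Rademacher

section Integral

variable {Ω : Type*} {mΩ : MeasurableSpace Ω} {μ : Measure Ω} [IsProbabilityMeasure μ] {f : Ω → ℝ}

lemma integral_sub_const_of_isProbabilityMeasure (hf : Integrable f μ) (c : ℝ) :
    ∫ ω, (f ω - c) ∂μ = ∫ ω, f ω ∂μ - c := by
  simp [integral_sub hf (integrable_const c)]

lemma sq_integral_sub_le_integral_sq_sub (hf : MemLp f 2 μ) (c : ℝ) :
    (∫ ω, f ω ∂μ - c) ^ 2 ≤ ∫ ω, (f ω - c) ^ 2 ∂μ := by
  rw [← integral_sub_const_of_isProbabilityMeasure (hf.integrable one_le_two), ← sub_nonneg]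
  exact (variance_nonneg _ μ).trans_eq (variance_eq_sub (hf.sub (memLp_const c)))

lemma abs_integral_sub_le_of_ae {c C : ℝ} (hf : Integrable f μ) (h : ∀ᵐ ω ∂μ, |f ω - c| ≤ C) :
    |∫ ω, f ω ∂μ - c| ≤ C := by
  rw [← integral_sub_const_of_isProbabilityMeasure hf, ← norm_eq_abs]
  exact (norm_integral_le_of_norm_le_const (C := C) h).trans_eq (by simp)

end Integral

section Matrix

open Matrix

variable {ι : Type*} [Fintype ι]

/-- A square matrix whose entries all have absolute value `1 / √d`, where `d` is its size, as those
of the normalized Hadamard matrices. -/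
def HasFlatEntries (H : Matrix ι ι ℝ) : Prop :=
  ∀ i j, H i j ^ 2 = (Fintype.card ι : ℝ)⁻¹

variable {H : Matrix ι ι ℝ}

lemma HasFlatEntries.sum_mul_sq (hH : HasFlatEntries H) (v : ι → ℝ) (i : ι) :
    ∑ j, (H i j * v j) ^ 2 = ‖WithLp.toLp 2 v‖ ^ 2 / Fintype.card ι := by
  simp_rw [EuclideanSpace.real_norm_sq_eq, mul_pow, hH i, ← Finset.mul_sum, div_eq_inv_mul]

lemma HasFlatEntries.cos_sqrt_card_mul (hH : HasFlatEntries H) (i j : ι) (t : ℝ) :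
    cos (√(Fintype.card ι) * H i j * t) = cos t := by
  have : Nonempty ι := ⟨i⟩
  have sq_eq_one : (√(Fintype.card ι) * H i j) ^ 2 = 1 := by
    rw [mul_pow, hH, sq_sqrt (Nat.cast_nonneg _)]
    field_simp
  obtain h | h := sq_eq_one_iff.1 sq_eq_one <;> simp [h]

variable [DecidableEq ι]

lemma norm_toLp_mulVec_of_mem_orthogonalGroup {U : Matrix ι ι ℝ} (hU : U ∈ orthogonalGroup ι ℝ)
    (v : ι → ℝ) : ‖WithLp.toLp 2 (U *ᵥ v)‖ = ‖WithLp.toLp 2 v‖ := by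
  rw [← sq_eq_sq₀ (norm_nonneg _) (norm_nonneg _), ← real_inner_self_eq_norm_sq,
    ← real_inner_self_eq_norm_sq, EuclideanSpace.inner_toLp_toLp, EuclideanSpace.inner_toLp_toLp,
    star_trivial, star_trivial, dotProduct_mulVec, ← mulVec_transpose, mulVec_mulVec,
    (mem_orthogonalGroup_iff' ι ℝ).1 hU, one_mulVec]

lemma diagonal_mem_orthogonalGroup {ε : ι → ℝ} (hε : ∀ i, ε i ^ 2 = 1) :
    diagonal ε ∈ orthogonalGroup ι ℝ := by
  rw [mem_orthogonalGroup_iff, diagonal_transpose, diagonal_mul_diagonal]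
  simp [← sq, hε]

lemma mul_diagonal_mulVec_apply (H : Matrix ι ι ℝ) (ε v : ι → ℝ) (i : ι) :
    ((H * diagonal ε) *ᵥ v) i = ∑ j, H i j * v j * ε j := by
  simp only [mulVec, dotProduct, mul_diagonal, mul_right_comm]

lemma HasFlatEntries.integral_cos_sqrt_card_smul (hH : HasFlatEntries H) (u : ι → ℝ) (i : ι) :
    ∫ ε, cos (√(Fintype.card ι) * ((H * diagonal ε) *ᵥ u) i) ∂rademacherPi ι = ∏ j, cos (u j) := by
  simp_rw [mul_diagonal_mulVec_apply, Finset.mul_sum, ← mul_assoc,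
    integral_cos_sum_mul_rademacherPi, hH.cos_sqrt_card_mul]

lemma integrable_mulVec_apply_pow_four (H : Matrix ι ι ℝ) (v : ι → ℝ) (i : ι) :
    Integrable (fun ε => ((H * diagonal ε) *ᵥ v) i ^ 4) (rademacherPi ι) := by
  simpa only [mul_diagonal_mulVec_apply] using
    integrable_pow_four_of_hasSubgaussianMGF (hasSubgaussianMGF_sum_mul_rademacherPi _)

lemma HasFlatEntries.integral_sum_pow_four_le (hH : HasFlatEntries H) (v : ι → ℝ) :
    ∫ ε, ∑ i, ((H * diagonal ε) *ᵥ v) i ^ 4 ∂rademacherPi ι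
      ≤ 12 * ‖WithLp.toLp 2 v‖ ^ 4 / Fintype.card ι := by
  rw [integral_finsetSum _ fun i _ => integrable_mulVec_apply_pow_four H v i]
  calc ∑ i, ∫ ε, ((H * diagonal ε) *ᵥ v) i ^ 4 ∂rademacherPi ι
      ≤ ∑ _ : ι, 12 * (‖WithLp.toLp 2 v‖ ^ 2 / Fintype.card ι) ^ 2 := by
        refine Finset.sum_le_sum fun i _ => ?_
        simpa only [mul_diagonal_mulVec_apply, hH.sum_mul_sq] using
          integral_sum_mul_pow_four_rademacherPi_le fun j => H i j * v j
    _ = 12 * ‖WithLp.toLp 2 v‖ ^ 4 / Fintype.card ι := by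
        rw [Finset.sum_const, Finset.card_univ, nsmul_eq_mul]
        field_simp

lemma ae_mul_diagonal_mem_orthogonalGroup (hH : H ∈ orthogonalGroup ι ℝ) :
    ∀ᵐ ε ∂rademacherPi ι, H * diagonal ε ∈ orthogonalGroup ι ℝ := by
  filter_upwards [ae_rademacherPi_sq_eq_one] with ε hε
  exact mul_mem hH (diagonal_mem_orthogonalGroup hε)

lemma memLp_prod_cos_mulVec (H : Matrix ι ι ℝ) (v : ι → ℝ) (p : ENNReal) :
    MemLp (fun ε => ∏ j, cos (((H * diagonal ε) *ᵥ v) j)) p (rademacherPi ι) :=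
  .of_bound (Continuous.aestronglyMeasurable (by fun_prop)) 1 <|
    ae_of_all _ fun _ => abs_prod_cos_le_one _

lemma sq_integral_prod_cos_sub_exp_mul_le (hH : HasFlatEntries H) (hH' : H ∈ orthogonalGroup ι ℝ)
    (v : ι → ℝ) :
    (∫ ε, ∏ j, cos (((H * diagonal ε) *ᵥ v) j) ∂rademacherPi ι
        - exp (-‖WithLp.toLp 2 v‖ ^ 2 / 2)) ^ 2 * ‖WithLp.toLp 2 v‖ ^ 2
      ≤ 24 * ‖WithLp.toLp 2 v‖ ^ 4 / Fintype.card ι := by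
  set z := ‖WithLp.toLp 2 v‖ with hz
  set P : (ι → ℝ) → ℝ := fun ε => ∏ j, cos (((H * diagonal ε) *ᵥ v) j)
  have memLp_P : MemLp P 2 (rademacherPi ι) := memLp_prod_cos_mulVec H v 2
  have sq_sub_mul_le : ∀ᵐ ε ∂rademacherPi ι,
      (P ε - exp (-z ^ 2 / 2)) ^ 2 * z ^ 2 ≤ 2 * ∑ j, ((H * diagonal ε) *ᵥ v) j ^ 4 := by
    filter_upwards [ae_mul_diagonal_mem_orthogonalGroup hH'] with ε hε
    have sum_sq_eq : ∑ j, ((H * diagonal ε) *ᵥ v) j ^ 2 = z ^ 2 := by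
      rw [hz, ← norm_toLp_mulVec_of_mem_orthogonalGroup hε, EuclideanSpace.real_norm_sq_eq]
    simpa only [sum_sq_eq] using sq_prod_cos_sub_exp_mul_le ((H * diagonal ε) *ᵥ v)
  calc (∫ ε, P ε ∂rademacherPi ι - exp (-z ^ 2 / 2)) ^ 2 * z ^ 2
      ≤ (∫ ε, (P ε - exp (-z ^ 2 / 2)) ^ 2 ∂rademacherPi ι) * z ^ 2 := by
        gcongr
        exact sq_integral_sub_le_integral_sq_sub memLp_P _
    _ = ∫ ε, (P ε - exp (-z ^ 2 / 2)) ^ 2 * z ^ 2 ∂rademacherPi ι := (integral_mul_const _ _).symm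
    _ ≤ ∫ ε, 2 * ∑ j, ((H * diagonal ε) *ᵥ v) j ^ 4 ∂rademacherPi ι :=
        integral_mono_ae ((memLp_P.sub (memLp_const _)).integrable_sq.mul_const _)
          ((integrable_finsetSum _ fun i _ => integrable_mulVec_apply_pow_four H v i).const_mul _)
          sq_sub_mul_le
    _ = 2 * ∫ ε, ∑ j, ((H * diagonal ε) *ᵥ v) j ^ 4 ∂rademacherPi ι := integral_const_mul _ _
    _ ≤ 2 * (12 * z ^ 4 / Fintype.card ι) := by
        gcongr
        exact hH.integral_sum_pow_four_le v
    _ = 24 * z ^ 4 / Fintype.card ι := by ring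

lemma abs_integral_prod_cos_sub_exp_le (hH : HasFlatEntries H)
    (hH' : H ∈ orthogonalGroup ι ℝ) (v : ι → ℝ) :
    |∫ ε, ∏ j, cos (((H * diagonal ε) *ᵥ v) j) ∂rademacherPi ι
        - exp (-‖WithLp.toLp 2 v‖ ^ 2 / 2)|
      ≤ 5 * ‖WithLp.toLp 2 v‖ / √(Fintype.card ι) := by
  obtain rfl | hv := eq_or_ne v 0
  · simp
  have z_pos : 0 < ‖WithLp.toLp 2 v‖ := by simpa using hv
  refine abs_le_of_sq_le_sq (le_of_mul_le_mul_right ?_ (pow_pos z_pos 2)) (by positivity)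
  calc _ ≤ 24 * ‖WithLp.toLp 2 v‖ ^ 4 / Fintype.card ι :=
        sq_integral_prod_cos_sub_exp_mul_le hH hH' v
    _ ≤ 25 * ‖WithLp.toLp 2 v‖ ^ 4 / Fintype.card ι := by gcongr; norm_num
    _ = (5 * ‖WithLp.toLp 2 v‖ / √(Fintype.card ι)) ^ 2 * ‖WithLp.toLp 2 v‖ ^ 2 := by
        rw [div_pow, sq_sqrt (Nat.cast_nonneg _)]
        ring

end Matrix

section Hadamard

variable {n : ℕ}

/-- Complementation of the `k`-th binary digit of an index of `hadamardMatrix n`, encoded as an XOR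
with `2 ^ k`. Applied to the rows, it changes the sign of the columns whose `k`-th digit is `1`. -/
def flipBit (k : Fin n) (i : Fin (2 ^ n)) : Fin (2 ^ n) :=
  ⟨i ^^^ 2 ^ (k : ℕ), Nat.xor_lt_two_pow i.2 (Nat.pow_lt_pow_right one_lt_two k.2)⟩

lemma flipBit_involutive (k : Fin n) : Function.Involutive (flipBit k) := fun i => by
  ext
  simp [flipBit]

lemma hadamardMatrix_eq_prod_div (i j : Fin (2 ^ n)) : hadamardMatrix n i j =
    (∏ k : Fin n, (-1) ^ (((i : ℕ).testBit k).toNat * ((j : ℕ).testBit k).toNat)) / √(2 ^ n) := by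
  rw [Finset.prod_pow_eq_pow_sum, hadamardMatrix, Matrix.of_apply]

lemma hadamardMatrix_flipBit (k : Fin n) (i j : Fin (2 ^ n)) :
    hadamardMatrix n (flipBit k i) j
      = (-1) ^ ((j : ℕ).testBit k).toNat * hadamardMatrix n i j := by
  rw [hadamardMatrix_eq_prod_div, hadamardMatrix_eq_prod_div, ← mul_div_assoc,
    ← Finset.mul_prod_erase _ _ (Finset.mem_univ k),
    ← Finset.mul_prod_erase (a := k) _ _ (Finset.mem_univ k), ← mul_assoc]
  congr 2
  · rw [flipBit, Nat.testBit_xor, Nat.testBit_two_pow_self]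
    cases (i : ℕ).testBit k <;> cases (j : ℕ).testBit k <;> simp
  · refine Finset.prod_congr rfl fun l hl => ?_
    have hkl : (k : ℕ) ≠ l := fun h => Finset.ne_of_mem_erase hl (Fin.ext h.symm)
    rw [flipBit, Nat.testBit_xor, Nat.testBit_two_pow_of_ne hkl, Bool.xor_false]

lemma exists_testBit_ne {i j : Fin (2 ^ n)} (hij : i ≠ j) :
    ∃ k : Fin n, (i : ℕ).testBit k ≠ (j : ℕ).testBit k := by
  contrapose! hij
  refine Fin.ext (Nat.eq_of_testBit_eq fun k => ?_)
  obtain hk | hk := lt_or_ge k n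
  · exact hij ⟨k, hk⟩
  · have two_pow_le : 2 ^ n ≤ 2 ^ k := Nat.pow_le_pow_right two_pos hk
    rw [Nat.testBit_lt_two_pow (i.2.trans_le two_pow_le),
      Nat.testBit_lt_two_pow (j.2.trans_le two_pow_le)]

lemma hasFlatEntries_hadamardMatrix (n : ℕ) : HasFlatEntries (hadamardMatrix n) := fun i j => by
  rw [hadamardMatrix, Matrix.of_apply, div_pow, sq_sqrt (by positivity), ← pow_mul, mul_comm,
    pow_mul]
  simp

lemma sum_hadamardMatrix_mul_of_ne {i j : Fin (2 ^ n)} (hij : i ≠ j) :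
    ∑ l, hadamardMatrix n l i * hadamardMatrix n l j = 0 := by
  obtain ⟨k, hk⟩ := exists_testBit_ne hij
  have mul_flipBit (l : Fin (2 ^ n)) :
      hadamardMatrix n (flipBit k l) i * hadamardMatrix n (flipBit k l) j
        = -(hadamardMatrix n l i * hadamardMatrix n l j) := by
    rw [hadamardMatrix_flipBit, hadamardMatrix_flipBit]
    revert hk
    cases (i : ℕ).testBit k <;> cases (j : ℕ).testBit k <;> simp
  have sum_eq_neg := Equiv.sum_comp (flipBit_involutive k).toPerm
    fun l => hadamardMatrix n l i * hadamardMatrix n l j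
  simp only [Function.Involutive.coe_toPerm, mul_flipBit, Finset.sum_neg_distrib] at sum_eq_neg
  linarith

lemma hadamardMatrix_mem_orthogonalGroup (n : ℕ) :
    hadamardMatrix n ∈ Matrix.orthogonalGroup (Fin (2 ^ n)) ℝ := by
  rw [Matrix.mem_orthogonalGroup_iff']
  ext i j
  rw [Matrix.mul_apply, Matrix.one_apply]
  simp only [Matrix.transpose_apply]
  split_ifs with hij
  · simp_rw [hij, ← sq, hasFlatEntries_hadamardMatrix n _ j]
    simp
  · exact sum_hadamardMatrix_mul_of_ne hij

end Hadamard

section KernelEstimate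

open Matrix

variable {ι : Type*} [Fintype ι] [DecidableEq ι] {H₁ H₂ H₃ : Matrix ι ι ℝ}

lemma HasFlatEntries.integral_average_cos [Nonempty ι] (hH : HasFlatEntries H₁) (u : ι → ℝ) :
    ∫ ε, 1 / (Fintype.card ι : ℝ) *
        ∑ i, cos (√(Fintype.card ι) * ((H₁ * diagonal ε) *ᵥ u) i) ∂rademacherPi ι
      = ∏ j, cos (u j) := by
  have integrable_cos (i : ι) : Integrable
      (fun ε => cos (√(Fintype.card ι) * ((H₁ * diagonal ε) *ᵥ u) i)) (rademacherPi ι) :=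
    .of_bound (Continuous.aestronglyMeasurable (by fun_prop)) 1 <|
      ae_of_all _ fun _ => abs_cos_le_one _
  rw [integral_const_mul, integral_finsetSum _ fun i _ => integrable_cos i]
  simp_rw [hH.integral_cos_sqrt_card_smul]
  simp

lemma abs_integral_prod_prod_cos_sub_exp_le (hH₂ : HasFlatEntries H₂)
    (hH₂' : H₂ ∈ orthogonalGroup ι ℝ) (hH₃ : H₃ ∈ orthogonalGroup ι ℝ) (v : ι → ℝ) :
    |∫ ε, ∏ j, cos (((H₂ * diagonal ε.1) *ᵥ ((H₃ * diagonal ε.2) *ᵥ v)) j)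
          ∂(rademacherPi ι).prod (rademacherPi ι) - exp (-‖WithLp.toLp 2 v‖ ^ 2 / 2)|
      ≤ 5 * ‖WithLp.toLp 2 v‖ / √(Fintype.card ι) := by
  have integrable_prod_cos : Integrable
      (fun ε : (ι → ℝ) × (ι → ℝ) =>
        ∏ j, cos (((H₂ * diagonal ε.1) *ᵥ ((H₃ * diagonal ε.2) *ᵥ v)) j))
      ((rademacherPi ι).prod (rademacherPi ι)) :=
    .of_bound (Continuous.aestronglyMeasurable (by fun_prop)) 1 <|
      ae_of_all _ fun _ => abs_prod_cos_le_one _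
  rw [integral_prod_symm _ integrable_prod_cos]
  refine abs_integral_sub_le_of_ae integrable_prod_cos.integral_prod_right ?_
  filter_upwards [ae_mul_diagonal_mem_orthogonalGroup hH₃] with ε hε
  simpa only [norm_toLp_mulVec_of_mem_orthogonalGroup hε] using
    abs_integral_prod_cos_sub_exp_le hH₂ hH₂' ((H₃ * diagonal ε) *ᵥ v)

theorem stmt_14_general [Nonempty ι] (hH₁ : HasFlatEntries H₁) (hH₂ : HasFlatEntries H₂)
    (hH₂' : H₂ ∈ orthogonalGroup ι ℝ) (hH₃ : H₃ ∈ orthogonalGroup ι ℝ) (v : EuclideanSpace ℝ ι) :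
    |∫ ε, 1 / (Fintype.card ι : ℝ) * ∑ i, cos (((√(Fintype.card ι) •
            (H₁ * diagonal ε.1 * H₂ * diagonal ε.2.1 * H₃ * diagonal ε.2.2)) *ᵥ v) i)
          ∂(rademacherPi ι).prod ((rademacherPi ι).prod (rademacherPi ι))
        - exp (-‖v‖ ^ 2 / 2)|
      ≤ 5 * ‖v‖ / √(Fintype.card ι) := by
  have mulVec_eq (ε : (ι → ℝ) × (ι → ℝ) × (ι → ℝ)) (i : ι) :
      ((√(Fintype.card ι) • (H₁ * diagonal ε.1 * H₂ * diagonal ε.2.1 * H₃ * diagonal ε.2.2)) *ᵥ v) i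
        = √(Fintype.card ι) * ((H₁ * diagonal ε.1) *ᵥ
            ((H₂ * diagonal ε.2.1) *ᵥ ((H₃ * diagonal ε.2.2) *ᵥ v))) i := by
    simp only [smul_mulVec, mulVec_mulVec, Matrix.mul_assoc, Pi.smul_apply, smul_eq_mul]
  have integrable_average : Integrable (fun ε : (ι → ℝ) × (ι → ℝ) × (ι → ℝ) =>
      1 / (Fintype.card ι : ℝ) * ∑ i, cos (√(Fintype.card ι) * ((H₁ * diagonal ε.1) *ᵥ
        ((H₂ * diagonal ε.2.1) *ᵥ ((H₃ * diagonal ε.2.2) *ᵥ v))) i))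
      ((rademacherPi ι).prod ((rademacherPi ι).prod (rademacherPi ι))) :=
    (integrable_finsetSum _ fun i _ =>
      .of_bound (Continuous.aestronglyMeasurable (by fun_prop)) 1 <|
        ae_of_all _ fun _ => abs_cos_le_one _).const_mul _
  simp_rw [mulVec_eq]
  rw [integral_prod_symm _ integrable_average]
  simp_rw [hH₁.integral_average_cos]
  exact abs_integral_prod_prod_cos_sub_exp_le hH₂ hH₂' hH₃ v

end KernelEstimate

/-- for `d = 2^n`, `σ > 0`, `x, y ∈ ℝ^d` with `z = ‖x−y‖/σ`, and independent
random sign diagonal matrices `D₁, D₂, D₃`, the SORF kernel estimate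
`K_SORF(x,y) = (1/d)·Σᵢ cos(wᵢᵀ(x−y)/σ)`, where `w₁,…,w_d` are the rows of
`√d·H·D₁·H·D₂·H·D₃`, satisfies `|E[K_SORF(x,y)] − e^{-z²/2}| ≤ 6z/√d`. -/
theorem stmt_14 (n : ℕ) (σ : ℝ) (hσ : 0 < σ) (x y : EuclideanSpace ℝ (Fin (2 ^ n))) :
    |(∫ ε : (Fin (2 ^ n) → ℝ) × ((Fin (2 ^ n) → ℝ) × (Fin (2 ^ n) → ℝ)),
          (1 / (2 ^ n : ℝ)) * ∑ i : Fin (2 ^ n),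
            Real.cos ((Real.sqrt (2 ^ n) •
                (hadamardMatrix n * Matrix.diagonal ε.1 * hadamardMatrix n *
                  Matrix.diagonal ε.2.1 * hadamardMatrix n *
                  Matrix.diagonal ε.2.2)).mulVec (σ⁻¹ • (x - y)) i)
          ∂((Measure.pi fun _ : Fin (2 ^ n) => rademacher).prod
              ((Measure.pi fun _ : Fin (2 ^ n) => rademacher).prod
                (Measure.pi fun _ : Fin (2 ^ n) => rademacher))))
        - Real.exp (-(‖x - y‖ / σ) ^ 2 / 2)|
      ≤ 6 * (‖x - y‖ / σ) / Real.sqrt (2 ^ n) := by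
  calc _ ≤ 5 * (‖x - y‖ / σ) / √(2 ^ n) := by
        simpa [norm_smul, abs_of_pos hσ, inv_mul_eq_div] using
          stmt_14_general (hasFlatEntries_hadamardMatrix n) (hasFlatEntries_hadamardMatrix n)
            (hadamardMatrix_mem_orthogonalGroup n) (hadamardMatrix_mem_orthogonalGroup n)
            (σ⁻¹ • (x - y))
    _ ≤ 6 * (‖x - y‖ / σ) / √(2 ^ n) := by gcongr; norm_num
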